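/- For all integers k, l ≥ 1, the relations (ad A)^l(C^k) = (m^k − 1)^l·C^k A^l and (ad B)^l(C^k) = (1 − m^k)^l·B^l C^k hold in R. -/

import Mathlib

noncomputable section

open FreeAlgebra

attribute [local instance 100] LieRing.ofAssociativeRing

/-- The defining relation `A*B = m • (B*A) + b·1` on the free algebra `F⟨A,B⟩`
(the free unital associative algebra on two generators `A = ι F 0`, `B = ι F 1`). -/
def twistRel (F : Type*) [Field F] (m b : F) :
    FreeAlgebra F (Fin 2) → FreeAlgebra F (Fin 2) → Prop :=
  fun p q => p = ι F 0 * ι F 1 ∧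
    q = m • (ι F 1 * ι F 0) + algebraMap F (FreeAlgebra F (Fin 2)) b

/-- `R = F⟨A,B⟩ / (AB − m·BA − b·1)`. -/
abbrev TwistAlg (F : Type*) [Field F] (m b : F) := RingQuot (twistRel F m b)

/-- The image of the generator `A` in `R`. -/
def genA (F : Type*) [Field F] (m b : F) : TwistAlg F m b :=
  RingQuot.mkAlgHom F (twistRel F m b) (ι F 0)

/-- The image of the generator `B` in `R`. -/
def genB (F : Type*) [Field F] (m b : F) : TwistAlg F m b :=
  RingQuot.mkAlgHom F (twistRel F m b) (ι F 1)

/-- `C := A*B − B*A` in `R`. -/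
def genC (F : Type*) [Field F] (m b : F) : TwistAlg F m b :=
  genA F m b * genB F m b - genB F m b * genA F m b

/-!
Since `C = [A, B]` and scalars are central, `AC = [A, AB] = [A, m BA + b] = m [A, B] A = m CA`,
and likewise `CB = m BC`. Hence `A C^k = m^k C^k A` and `C^k B = m^k B C^k`, so `ad A` sends
`C^k A^n` to `(m^k - 1) C^k A^(n+1)`, and `ad B` sends `B^n C^k` to `(1 - m^k) B^(n+1) C^k`.
-/

theorem end_pow_apply_eq_pow_smul {K M : Type*} [Semiring K] [AddCommMonoid M] [Module K M]
    {f : Module.End K M} {t : K} {u : ℕ → M} (hf : ∀ n, f (u n) = t • u (n + 1)) (n : ℕ) :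
    (f ^ n) (u 0) = t ^ n • u n := by
  induction n with
  | zero => simp
  | succ n ih => rw [pow_succ', Module.End.mul_apply, ih, map_smul, hf, smul_smul, ← pow_succ]

/-- `x` and `y` commute up to the scalar `q`, in the order `x * y = q • (y * x)`. This is the
relation that the commutator of the generators satisfies with each generator. -/
def QCommute {K R : Type*} [SMul K R] [Mul R] (q : K) (x y : R) : Prop :=
  x * y = q • (y * x)

namespace QCommute

section Pow

variable {K R : Type*} [Monoid K] [Monoid R] [MulAction K R] [IsScalarTower K R R]
  [SMulCommClass K R R] {q : K} {x y : R}

theorem pow_right (h : QCommute q x y) (k : ℕ) : QCommute (q ^ k) x (y ^ k) := by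
  have hsemiconj : SemiconjBy x y (q • y) := h.trans (smul_mul_assoc q y x).symm
  have hpow := hsemiconj.pow_right k
  rwa [smul_pow, SemiconjBy, smul_mul_assoc] at hpow

theorem pow_left (h : QCommute q x y) (k : ℕ) : QCommute (q ^ k) (x ^ k) y := by
  have hsemiconj : SemiconjBy y (q • x) x := (mul_smul_comm q y x).trans h.symm
  have hpow := hsemiconj.pow_right k
  rw [smul_pow, SemiconjBy, mul_smul_comm] at hpow
  exact hpow.symm

end Pow

section Commutator

variable {K R : Type*} [Monoid K] [Ring R] [DistribMulAction K R] [IsScalarTower K R R]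
  [SMulCommClass K R R] {q : K} {a b z : R}

theorem commutator_right (hab : a * b = q • (b * a) + z) (hz : Commute a z) :
    QCommute q a ⁅a, b⁆ :=
  calc a * ⁅a, b⁆ = a * (a * b) - a * b * a := by rw [Ring.lie_def, mul_sub, mul_assoc a b a]
    _ = a * (q • (b * a) + z) - (q • (b * a) + z) * a := by rw [hab]
    _ = q • (a * (b * a)) - q • (b * a * a) := by
      rw [mul_add, add_mul, hz.eq, mul_smul_comm, smul_mul_assoc, add_sub_add_right_eq_sub]
    _ = q • (⁅a, b⁆ * a) := by rw [← smul_sub, Ring.lie_def, sub_mul, mul_assoc a b a]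

theorem commutator_left (hab : a * b = q • (b * a) + z) (hz : Commute b z) :
    QCommute q ⁅a, b⁆ b :=
  calc ⁅a, b⁆ * b = a * b * b - b * (a * b) := by rw [Ring.lie_def, sub_mul, mul_assoc b a b]
    _ = (q • (b * a) + z) * b - b * (q • (b * a) + z) := by rw [hab]
    _ = q • (b * a * b) - q • (b * (b * a)) := by
      rw [mul_add, add_mul, hz.eq, mul_smul_comm, smul_mul_assoc, add_sub_add_right_eq_sub]
    _ = q • (b * ⁅a, b⁆) := by rw [← smul_sub, Ring.lie_def, mul_sub, mul_assoc b a b]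

end Commutator

section Ad

variable {K R : Type*} [CommRing K] [Ring R] [Algebra K R] {q : K} {a b c : R}

theorem lie_mul_pow (h : QCommute q a c) (n : ℕ) :
    ⁅a, c * a ^ n⁆ = (q - 1) • (c * a ^ (n + 1)) :=
  calc ⁅a, c * a ^ n⁆ = a * c * a ^ n - c * (a ^ n * a) := by
        rw [Ring.lie_def, mul_assoc a, mul_assoc c]
    _ = q • (c * a ^ (n + 1)) - c * a ^ (n + 1) := by
      rw [h, smul_mul_assoc, mul_assoc c, ← pow_succ', ← pow_succ]
    _ = (q - 1) • (c * a ^ (n + 1)) := by rw [sub_smul, one_smul]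

theorem lie_pow_mul (h : QCommute q c b) (n : ℕ) :
    ⁅b, b ^ n * c⁆ = (1 - q) • (b ^ (n + 1) * c) :=
  calc ⁅b, b ^ n * c⁆ = b * b ^ n * c - b ^ n * (c * b) := by
        rw [Ring.lie_def, mul_assoc b, mul_assoc (b ^ n)]
    _ = b ^ (n + 1) * c - q • (b ^ (n + 1) * c) := by
      rw [h, mul_smul_comm, ← mul_assoc (b ^ n), ← pow_succ', ← pow_succ]
    _ = (1 - q) • (b ^ (n + 1) * c) := by rw [sub_smul, one_smul]

theorem ad_left_pow_apply (h : QCommute q a c) (l : ℕ) :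
    (LieAlgebra.ad K R a ^ l) c = (q - 1) ^ l • (c * a ^ l) := by
  simpa only [pow_zero, mul_one] using
    end_pow_apply_eq_pow_smul (f := LieAlgebra.ad K R a) h.lie_mul_pow l

theorem ad_right_pow_apply (h : QCommute q c b) (l : ℕ) :
    (LieAlgebra.ad K R b ^ l) c = (1 - q) ^ l • (b ^ l * c) := by
  simpa only [pow_zero, one_mul] using
    end_pow_apply_eq_pow_smul (f := LieAlgebra.ad K R b) h.lie_pow_mul l

end Ad

end QCommute

theorem stmt19_general {K R : Type*} [CommRing K] [Ring R] [Algebra K R] {q : K} {a b z : R}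
    (hab : a * b = q • (b * a) + z) (haz : Commute a z) (hbz : Commute b z) (k l : ℕ) :
    (LieAlgebra.ad K R a ^ l) (⁅a, b⁆ ^ k) = (q ^ k - 1) ^ l • (⁅a, b⁆ ^ k * a ^ l) ∧
    (LieAlgebra.ad K R b ^ l) (⁅a, b⁆ ^ k) = (1 - q ^ k) ^ l • (b ^ l * ⁅a, b⁆ ^ k) :=
  ⟨((QCommute.commutator_right hab haz).pow_right k).ad_left_pow_apply l,
    ((QCommute.commutator_left hab hbz).pow_left k).ad_right_pow_apply l⟩

theorem genA_mul_genB (F : Type*) [Field F] (m b : F) :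
    genA F m b * genB F m b =
      m • (genB F m b * genA F m b) + algebraMap F (TwistAlg F m b) b := by
  simpa only [genA, genB, map_mul, map_add, map_smul, AlgHom.commutes] using
    RingQuot.mkAlgHom_rel F (s := twistRel F m b) ⟨rfl, rfl⟩

theorem stmt19 (F : Type*) [Field F] (m b : F) (hm0 : m ≠ 0) (hm1 : m ≠ 1)
    (k l : ℕ) (hk : 1 ≤ k) (hl : 1 ≤ l) :
    ((LieAlgebra.ad F (TwistAlg F m b) (genA F m b)) ^ l) (genC F m b ^ k) =
      (m ^ k - 1) ^ l • (genC F m b ^ k * genA F m b ^ l) ∧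
    ((LieAlgebra.ad F (TwistAlg F m b) (genB F m b)) ^ l) (genC F m b ^ k) =
      (1 - m ^ k) ^ l • (genB F m b ^ l * genC F m b ^ k) :=
  stmt19_general (genA_mul_genB F m b) (Algebra.commute_algebraMap_right b _)
    (Algebra.commute_algebraMap_right b _) k l
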